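/- Fix an integer k ≥ 2 and a real t ∈ [0,1). For every φ ∈ ℝ and every n ≥ 0, the function g_n(φ) = B̃_{φ,t,k}^n(φ) satisfies g_n(φ + 2π) = g_n(φ) + 2π·(k^{n+1} − 1)/(k − 1), and consequently for every φ_0 ∈ ℝ the number of solutions φ ∈ (φ_0, φ_0 + 2π] of g_n(φ) ∈ π + 2πℤ is exactly (k^{n+1} − 1)/(k − 1). Similarly, for n ≥ 1 the function ĝ_n(φ) = B̃_{φ,t,k+1}(B̃_{φ,t,k}^{n−1}(φ)) satisfies ĝ_n(φ + 2π) = ĝ_n(φ) + 2π·((k+1)·k^n − 2)/(k − 1). -/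

import Mathlib

/-- The lift of the Blaschke product `B_{e^{iφ},t,k}` to `ℝ`:
`B̃_{φ,t,k}(θ) = k·θ − 2k·arctan(t·sin θ/(1 + t·cos θ)) + φ`. -/
noncomputable def Blift (φ t : ℝ) (k : ℕ) (θ : ℝ) : ℝ :=
  (k : ℝ) * θ - 2 * (k : ℝ) * Real.arctan (t * Real.sin θ / (1 + t * Real.cos θ)) + φ

/-! Advancing `φ` by one turn advances `g_0 = id` by one turn. Each application of `B̃` multiplies
the number of turns by `k` and adds the one turn coming from `φ` itself, so `g_n` advances by
`1 + k + ⋯ + k^n` turns. The derivative of `B̃` in `θ` is `k` times the Poisson kernel, hence `g_n`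
is continuous and strictly increasing: over one turn of `φ` it sweeps a half-open interval of
`1 + k + ⋯ + k^n` turns bijectively, and meets each residue class modulo `2π` once per turn. -/

open Finset Real

-- At `x = k` both sides count the vertices of the full Cayley tree of depth `n ≥ 1`: the centre and
-- its `k + 1` rooted subtrees of depth `n - 1`.
lemma add_one_mul_geom_sum_add_one {F : Type*} [Field F] {x : F} (hx : x ≠ 1) (n : ℕ) :
    (x + 1) * ∑ i ∈ range n, x ^ i + 1 = ((x + 1) * x ^ n - 2) / (x - 1) := by
  have hx' : x - 1 ≠ 0 := sub_ne_zero.2 hx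
  rw [geom_sum_eq hx]
  field_simp
  ring

section Counting

variable {K : Type*} [Field K] [LinearOrder K] [IsStrictOrderedRing K] [FloorRing K]

lemma ncard_Ioc_inter_range_add_mul_intCast {p : K} (hp : 0 < p) (a b c : K) :
    (Set.Ioc a b ∩ Set.range fun m : ℤ ↦ c + p * m).ncard =
      (⌊(b - c) / p⌋ - ⌊(a - c) / p⌋).toNat := by
  have hinj : Function.Injective fun m : ℤ ↦ c + p * (m : K) := fun m m' h ↦
    Int.cast_injective (mul_left_cancel₀ hp.ne' (add_left_cancel h))
  have hpre : (fun m : ℤ ↦ c + p * (m : K)) ⁻¹' Set.Ioc a b =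
      Set.Ioc ⌊(a - c) / p⌋ ⌊(b - c) / p⌋ := by
    rw [← Int.preimage_Ioc]
    ext m
    simp only [Set.mem_preimage, Set.mem_Ioc, div_lt_iff₀' hp, le_div_iff₀' hp,
      sub_lt_iff_lt_add', le_sub_iff_add_le']
  rw [← Set.image_preimage_eq_inter_range, Set.ncard_image_of_injective _ hinj, hpre,
    ← coe_Ioc, Set.ncard_coe_finset, Int.card_Ioc]

lemma ncard_Ioc_add_mul_natCast_inter_range {p : K} (hp : 0 < p) (a c : K) (N : ℕ) :
    (Set.Ioc a (a + p * N) ∩ Set.range fun m : ℤ ↦ c + p * m).ncard = N := by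
  have hfloor : ⌊(a + p * N - c) / p⌋ = ⌊(a - c) / p⌋ + N := by
    rw [add_sub_right_comm, add_div, mul_div_cancel_left₀ _ hp.ne', Int.floor_add_natCast]
  rw [ncard_Ioc_inter_range_add_mul_intCast hp, hfloor, add_sub_cancel_left, Int.toNat_natCast]

lemma ncard_sep_Ioc_eq_add_mul_intCast {α : Type*} [ConditionallyCompleteLinearOrder α]
    [TopologicalSpace α] [OrderTopology α] [DenselyOrdered α] [TopologicalSpace K]
    [OrderClosedTopology K] {g : α → K} (hg : StrictMono g) (hgc : Continuous g) {p : K}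
    (hp : 0 < p) (c : K) {a b : α} {N : ℕ} (hab : g b = g a + p * N) :
    {x ∈ Set.Ioc a b | ∃ m : ℤ, g x = c + p * m}.ncard = N := by
  have himage : g '' {x ∈ Set.Ioc a b | ∃ m : ℤ, g x = c + p * m} =
      Set.Ioc (g a) (g b) ∩ Set.range fun m : ℤ ↦ c + p * m := by
    rw [← hgc.image_Ioc_of_strictMono hg, ← Set.image_inter_preimage]
    congr 1
    ext x
    simp only [Set.mem_ofPred_eq, Set.mem_inter_iff, Set.mem_preimage, Set.mem_range, eq_comm]
  rw [← Set.ncard_image_of_injective _ hg.injective, himage, hab,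
    ncard_Ioc_add_mul_natCast_inter_range hp]

end Counting

section Blift

variable {t : ℝ}

lemma one_add_mul_cos_pos (ht : |t| < 1) (θ : ℝ) : 0 < 1 + t * cos θ := by
  have h : |t * cos θ| < 1 := by
    rw [abs_mul]
    exact (mul_le_of_le_one_right (abs_nonneg t) (abs_cos_le_one θ)).trans_lt ht
  linarith [neg_lt_of_abs_lt h]

lemma Blift_add_left (φ c t : ℝ) (k : ℕ) (θ : ℝ) : Blift (φ + c) t k θ = Blift φ t k θ + c :=
  (add_assoc _ _ _).symm

lemma Blift_add_int_mul_two_pi (φ t : ℝ) (k : ℕ) (θ : ℝ) (m : ℤ) :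
    Blift φ t k (θ + 2 * π * m) = Blift φ t k θ + 2 * π * (k * m) := by
  simp only [Blift, mul_comm (2 * π) (m : ℝ), sin_add_int_mul_two_pi, cos_add_int_mul_two_pi]
  ring

lemma hasDerivAt_Blift (φ : ℝ) (k : ℕ) {θ : ℝ} (h : 1 + t * cos θ ≠ 0) :
    HasDerivAt (Blift φ t k) (k * ((1 - t ^ 2) / ((1 + t * cos θ) ^ 2 + (t * sin θ) ^ 2))) θ := by
  have hsin : HasDerivAt (fun x ↦ t * sin x) (t * cos θ) θ := (hasDerivAt_sin θ).const_mul t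
  have hcos : HasDerivAt (fun x ↦ 1 + t * cos x) (t * -sin θ) θ :=
    ((hasDerivAt_cos θ).const_mul t).const_add 1
  have hB := (((hasDerivAt_id θ).const_mul (k : ℝ)).sub
    ((hsin.fun_div hcos h).arctan.const_mul (2 * (k : ℝ)))).add_const φ
  refine hB.congr_deriv ?_
  field_simp
  linear_combination (-(k : ℝ) * t ^ 2) * sin_sq_add_cos_sq θ

lemma continuous_uncurry_Blift (ht : |t| < 1) (k : ℕ) :
    Continuous fun p : ℝ × ℝ ↦ Blift p.1 t k p.2 := by
  unfold Blift
  fun_prop (disch := exact fun p ↦ (one_add_mul_cos_pos ht _).ne')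

lemma monotone_Blift (ht : |t| < 1) (φ : ℝ) (k : ℕ) : Monotone (Blift φ t k) := by
  have hderiv (θ : ℝ) := hasDerivAt_Blift φ k (one_add_mul_cos_pos ht θ).ne'
  refine monotone_of_deriv_nonneg (fun θ ↦ (hderiv θ).differentiableAt) fun θ ↦ ?_
  have ht2 : 0 ≤ 1 - t ^ 2 := sub_nonneg.2 ((sq_lt_one_iff_abs_lt_one t).2 ht).le
  rw [(hderiv θ).deriv]
  positivity

lemma Blift_lt_Blift (ht : |t| < 1) (k : ℕ) {φ φ' θ θ' : ℝ} (hφ : φ < φ') (hθ : θ ≤ θ') :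
    Blift φ t k θ < Blift φ' t k θ' :=
  calc
    Blift φ t k θ < Blift φ' t k θ := add_lt_add_right hφ _
    _ ≤ Blift φ' t k θ' := monotone_Blift ht φ' k hθ

end Blift

/-- The angle `g_n(φ) = B̃_{φ,t,k}^n(φ)`, whose values in `π + 2πℤ` mark the Lee–Yang zeros of the
depth-`n` rooted Cayley tree with branching number `k`. -/
noncomputable def leeYangPhase (t : ℝ) (k n : ℕ) (φ : ℝ) : ℝ :=
  (Blift φ t k)^[n] φ

section leeYangPhase

lemma leeYangPhase_succ (t : ℝ) (k n : ℕ) (φ : ℝ) :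
    leeYangPhase t k (n + 1) φ = Blift φ t k (leeYangPhase t k n φ) :=
  Function.iterate_succ_apply' _ _ _

lemma leeYangPhase_add_int_mul_two_pi (t : ℝ) (k n : ℕ) (φ : ℝ) (m : ℤ) :
    leeYangPhase t k n (φ + 2 * π * m) =
      leeYangPhase t k n φ + 2 * π * (m * ∑ i ∈ range (n + 1), (k : ℤ) ^ i : ℤ) := by
  induction n with
  | zero => simp [leeYangPhase]
  | succ n ih =>
    rw [leeYangPhase_succ, leeYangPhase_succ, ih, Blift_add_left, Blift_add_int_mul_two_pi,
      geom_sum_succ (n := n + 1)]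
    push_cast
    ring

variable {t : ℝ}

lemma strictMono_leeYangPhase (ht : |t| < 1) (k n : ℕ) : StrictMono (leeYangPhase t k n) := by
  induction n with
  | zero => exact strictMono_id
  | succ n ih =>
    intro φ φ' hφ
    rw [leeYangPhase_succ, leeYangPhase_succ]
    exact Blift_lt_Blift ht k hφ (ih hφ).le

lemma continuous_leeYangPhase (ht : |t| < 1) (k n : ℕ) : Continuous (leeYangPhase t k n) := by
  induction n with
  | zero => exact continuous_id
  | succ n ih =>
    simp only [funext (leeYangPhase_succ t k n)]
    exact (continuous_uncurry_Blift ht k).comp (continuous_id.prodMk ih)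

end leeYangPhase

theorem stmt19_general (k : ℕ) (t : ℝ) :
    (∀ n : ℕ, ∀ φ : ℝ,
      (Blift (φ + 2 * π) t k)^[n] (φ + 2 * π) =
        (Blift φ t k)^[n] φ + 2 * π * ∑ i ∈ range (n + 1), (k : ℝ) ^ i) ∧
    (|t| < 1 → ∀ n : ℕ, ∀ c φ0 : ℝ,
      {φ ∈ Set.Ioc φ0 (φ0 + 2 * π) | ∃ m : ℤ, (Blift φ t k)^[n] φ = c + 2 * π * m}.ncard =
        ∑ i ∈ range (n + 1), k ^ i) ∧
    (∀ l n : ℕ, ∀ φ : ℝ,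
      Blift (φ + 2 * π) t l ((Blift (φ + 2 * π) t k)^[n] (φ + 2 * π)) =
        Blift φ t l ((Blift φ t k)^[n] φ) +
          2 * π * (l * ∑ i ∈ range (n + 1), (k : ℝ) ^ i + 1)) := by
  have hshift (n : ℕ) (φ : ℝ) : leeYangPhase t k n (φ + 2 * π) =
      leeYangPhase t k n φ + 2 * π * (∑ i ∈ range (n + 1), k ^ i : ℕ) := by
    simpa using leeYangPhase_add_int_mul_two_pi t k n φ 1
  refine ⟨fun n φ ↦ ?_, fun ht n c φ0 ↦ ?_, fun l n φ ↦ ?_⟩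
  · exact_mod_cast hshift n φ
  · exact ncard_sep_Ioc_eq_add_mul_intCast (strictMono_leeYangPhase ht k n)
      (continuous_leeYangPhase ht k n) two_pi_pos c (hshift n φ0)
  · change Blift _ t l (leeYangPhase t k n _) = Blift φ t l (leeYangPhase t k n φ) + _
    rw [hshift, Blift_add_left, ← Int.cast_natCast, Blift_add_int_mul_two_pi]
    push_cast
    ring

theorem stmt19 (k : ℕ) (hk : 2 ≤ k) (t : ℝ) (ht0 : 0 ≤ t) (ht1 : t < 1) :
    (∀ n : ℕ, ∀ φ : ℝ,
      (Blift (φ + 2 * Real.pi) t k)^[n] (φ + 2 * Real.pi) =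
        (Blift φ t k)^[n] φ + 2 * Real.pi * (((k : ℝ) ^ (n + 1) - 1) / ((k : ℝ) - 1))) ∧
    (∀ n : ℕ, ∀ φ0 : ℝ,
      ({φ ∈ Set.Ioc φ0 (φ0 + 2 * Real.pi) | ∃ m : ℤ,
          (Blift φ t k)^[n] φ = Real.pi + 2 * Real.pi * m}).ncard =
        (k ^ (n + 1) - 1) / (k - 1)) ∧
    (∀ n : ℕ, 1 ≤ n → ∀ φ : ℝ,
      Blift (φ + 2 * Real.pi) t (k + 1) ((Blift (φ + 2 * Real.pi) t k)^[n - 1] (φ + 2 * Real.pi)) =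
        Blift φ t (k + 1) ((Blift φ t k)^[n - 1] φ) +
          2 * Real.pi * ((((k : ℝ) + 1) * (k : ℝ) ^ n - 2) / ((k : ℝ) - 1))) := by
  obtain ⟨hshift, hcount, hshift'⟩ := stmt19_general k t
  have hk1 : (k : ℝ) ≠ 1 := by exact_mod_cast (Nat.lt_of_succ_le hk).ne'
  refine ⟨fun n φ ↦ ?_, fun n φ0 ↦ ?_, fun n hn φ ↦ ?_⟩
  · rw [hshift, geom_sum_eq hk1]
  · rw [hcount (abs_lt.2 ⟨by linarith, ht1⟩), Nat.geomSum_eq hk]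
  · rw [hshift', Nat.sub_add_cancel hn, Nat.cast_add_one, add_one_mul_geom_sum_add_one hk1]
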